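/- Let f : ℝ^d → ℝ^d satisfy f(0) = 0, be Lipschitz continuous with constant C_L > 0, and be strongly monotone with constant ω_f > 0, i.e. ⟨f(x) − f(y), x − y⟩ ≥ ω_f |x − y|² for all x, y ∈ ℝ^d. Let τ > 0, Δt > 0, ε₀ > 0 and ε_s > ε_∞ be real constants, and let (Ω, μ) be a measure space. Then for any given P_prev, E ∈ L²(μ; ℝ^d) there exists a unique P ∈ L²(μ; ℝ^d) such that τ⟨(P − P_prev)/Δt, Ψ⟩ + ⟨f∘P, Ψ⟩ = ε₀(ε_s − ε_∞)⟨E, Ψ⟩ for every Ψ ∈ L²(μ; ℝ^d). -/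

import Mathlib

open MeasureTheory
open scoped RealInnerProductSpace

lemma zarantonello_aux {H : Type*} [NormedAddCommGroup H] [InnerProductSpace ℝ H]
    [CompleteSpace H] (A : H → H) (L ω : ℝ) (hL : 0 < L) (hω : 0 < ω)
    (hA : ∀ x y, ‖A x - A y‖ ≤ L * ‖x - y‖)
    (hm : ∀ x y, ω * ‖x - y‖ ^ 2 ≤ ⟪A x - A y, x - y⟫) (b : H) :
    ∃! x, A x = b := by
  set ρ : ℝ := ω / L ^ 2 with hρ
  have hρ0 : 0 < ρ := by positivity
  set q : ℝ := 1 - ω ^ 2 / L ^ 2 with hq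
  have hq1 : q < 1 := by
    have : 0 < ω ^ 2 / L ^ 2 := by positivity
    linarith
  let T : H → H := fun x => x - ρ • (A x - b)
  have hT : ∀ x y, ‖T x - T y‖ ≤ Real.sqrt q * ‖x - y‖ := by
    intro x y
    have e : T x - T y = (x - y) - ρ • (A x - A y) := by
      simp only [T, smul_sub]; abel
    have h1 : ‖T x - T y‖ ^ 2 ≤ q * ‖x - y‖ ^ 2 := by
      rw [e, norm_sub_sq_real, norm_smul, inner_smul_right, real_inner_comm,
        Real.norm_of_nonneg hρ0.le]
      have h2 := hm x y
      have h3 : ‖A x - A y‖ ^ 2 ≤ (L * ‖x - y‖) ^ 2 :=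
        pow_le_pow_left₀ (norm_nonneg _) (hA x y) 2
      have h4 := mul_le_mul_of_nonneg_left h2 hρ0.le
      have h5 := mul_le_mul_of_nonneg_left h3 (sq_nonneg ρ)
      have h6 : q * ‖x - y‖ ^ 2 = ‖x - y‖ ^ 2 - 2 * (ρ * (ω * ‖x - y‖ ^ 2))
          + ρ ^ 2 * (L * ‖x - y‖) ^ 2 := by
        rw [hq, hρ]; field_simp; ring
      rw [h6, mul_pow]
      linarith
    have h2 := Real.abs_le_sqrt h1
    rwa [abs_of_nonneg (norm_nonneg _), Real.sqrt_mul' _ (sq_nonneg _),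
      Real.sqrt_sq (norm_nonneg _)] at h2
  have hc : ContractingWith ⟨Real.sqrt q, Real.sqrt_nonneg q⟩ T := by
    refine ⟨?_, LipschitzWith.of_dist_le_mul fun x y => ?_⟩
    · apply NNReal.coe_lt_coe.mp
      change Real.sqrt q < 1
      rw [Real.sqrt_lt' one_pos]; simpa using hq1
    · rw [dist_eq_norm, dist_eq_norm]; exact hT x y
  have hx : T (hc.fixedPoint T) = hc.fixedPoint T := hc.fixedPoint_isFixedPt
  refine ⟨hc.fixedPoint T, ?_, ?_⟩
  · simp only [T] at hx
    have := sub_eq_self.mp hx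
    exact sub_eq_zero.mp ((smul_eq_zero.mp this).resolve_left hρ0.ne')
  · intro y hy
    apply hc.fixedPoint_unique
    change y - ρ • (A y - b) = y
    rw [hy]; simp

/-- Theorem 2: unique solvability of the semi-discrete-in-time polarization
equation `τ⟨(P - P_prev)/Δt, Ψ⟩ + ⟨f∘P, Ψ⟩ = ε₀(ε_s - ε_∞)⟨E, Ψ⟩` in
`L²(μ; ℝ^d)`, for `f` Lipschitz, strongly monotone, with `f 0 = 0`. -/
theorem stmt_2 (d : ℕ)
    (f : EuclideanSpace ℝ (Fin d) → EuclideanSpace ℝ (Fin d))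
    (hf0 : f 0 = 0)
    (C_L : ℝ) (hCL : 0 < C_L)
    (hLip : ∀ x y : EuclideanSpace ℝ (Fin d), ‖f x - f y‖ ≤ C_L * ‖x - y‖)
    (ωf : ℝ) (hωf : 0 < ωf)
    (hmono : ∀ x y : EuclideanSpace ℝ (Fin d),
      ωf * ‖x - y‖ ^ 2 ≤ ⟪f x - f y, x - y⟫)
    (τ Δt ε₀ εs εinf : ℝ) (hτ : 0 < τ) (hΔt : 0 < Δt) (hε₀ : 0 < ε₀) (hε : εinf < εs)
    {Ω : Type*} [MeasurableSpace Ω] (μ : Measure Ω)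
    (Pprev E : Lp (EuclideanSpace ℝ (Fin d)) 2 μ) :
    ∃! P : Lp (EuclideanSpace ℝ (Fin d)) 2 μ,
      ∀ Ψ : Lp (EuclideanSpace ℝ (Fin d)) 2 μ,
        τ * ⟪Δt⁻¹ • (P - Pprev), Ψ⟫ + (∫ x, ⟪f (P x), Ψ x⟫ ∂μ)
          = ε₀ * (εs - εinf) * ⟪E, Ψ⟫ := by
  have hl : LipschitzWith ⟨C_L, hCL.le⟩ f := LipschitzWith.of_dist_le_mul fun x y => by
    rw [dist_eq_norm, dist_eq_norm]; exact hLip x y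
  set F : Lp (EuclideanSpace ℝ (Fin d)) 2 μ → Lp (EuclideanSpace ℝ (Fin d)) 2 μ :=
    hl.compLp hf0 with hF
  have hFL : ∀ x y, ‖F x - F y‖ ≤ C_L * ‖x - y‖ := fun x y => hl.norm_compLp_sub_le hf0 x y
  have hFm : ∀ x y, ωf * ‖x - y‖ ^ 2 ≤ ⟪F x - F y, x - y⟫ := by
    intro x y
    rw [← real_inner_self_eq_norm_sq, ← real_inner_smul_left, L2.inner_def, L2.inner_def]
    refine integral_mono_ae (L2.integrable_inner _ _) (L2.integrable_inner _ _) ?_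
    filter_upwards [hl.coeFn_compLp hf0 x, hl.coeFn_compLp hf0 y,
      Lp.coeFn_sub (F x) (F y), Lp.coeFn_sub x y, Lp.coeFn_smul ωf (x - y)] with a h1 h2 h3 h4 h5
    rw [h5, h3, Pi.smul_apply, Pi.sub_apply, h4, Pi.sub_apply, hF, h1, h2,
      real_inner_smul_left, real_inner_self_eq_norm_sq]
    exact hmono (x a) (y a)
  have hint : ∀ P Ψ : Lp (EuclideanSpace ℝ (Fin d)) 2 μ,
      (∫ x, ⟪f (P x), Ψ x⟫ ∂μ) = ⟪F P, Ψ⟫ := by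
    intro P Ψ
    rw [L2.inner_def]
    refine integral_congr_ae ?_
    filter_upwards [hl.coeFn_compLp hf0 P] with a h1
    rw [hF, h1, Function.comp_apply]
  have ha : 0 < τ * Δt⁻¹ := by positivity
  set c : ℝ := τ * Δt⁻¹ with hc
  have key := zarantonello_aux (fun P => c • P + F P) (c + C_L) ωf (by positivity) hωf
    (fun x y => by
      have e : c • x + F x - (c • y + F y) = c • (x - y) + (F x - F y) := by
        rw [smul_sub]; abel
      rw [e, add_mul]
      refine (norm_add_le _ _).trans (add_le_add ?_ (hFL x y))
      rw [norm_smul, Real.norm_of_nonneg ha.le])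
    (fun x y => by
      have e : c • x + F x - (c • y + F y) = c • (x - y) + (F x - F y) := by
        rw [smul_sub]; abel
      rw [e, inner_add_left, real_inner_smul_left, real_inner_self_eq_norm_sq]
      have := mul_nonneg ha.le (sq_nonneg ‖x - y‖)
      linarith [hFm x y])
    (c • Pprev + (ε₀ * (εs - εinf)) • E)
  refine (existsUnique_congr fun P => ?_).mp key
  constructor
  · intro h Ψ
    have h' := congrArg (fun z => ⟪z, Ψ⟫) h
    simp only [inner_add_left, real_inner_smul_left] at h'
    rw [hint, real_inner_smul_left, inner_sub_left, ← mul_assoc, ← hc]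
    linarith
  · intro h
    refine ext_inner_right ℝ fun Ψ => ?_
    have h' := h Ψ
    rw [hint, real_inner_smul_left, inner_sub_left, ← mul_assoc, ← hc] at h'
    simp only [inner_add_left, real_inner_smul_left]
    linarith
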